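/- Let ω = (w₁,…,w_m) be a weight vector, let A₁,…,A_m be n×n positive definite complex matrices, and let t ∈ [1/2, 1]. Suppose X ∈ Γ(ω; A₁,…,A_m) with X ≥ I, and suppose Y is a positive definite matrix satisfying the power-mean equation Y = Σᵢ₌₁^m wᵢ (Y ♯_t Aᵢ). Then X⁻¹ ≤ Y in the Löwner order. -/

import Mathlib

/-!
Write `W = X⁻¹` and `F(V) = ∑ wᵢ (V ♯_t Aᵢ)`, so that `Y = F(Y)`.

The first point is `W ≤ F(W)`. Put `Zᵢ = Aᵢ ♯ X⁻¹`; the Riccati equation `Zᵢ X Zᵢ = Aᵢ` turns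
`W ♯_t Aᵢ` into `X^{-1/2} (X^{1/2} Zᵢ X^{1/2})^{2t} X^{-1/2}`. Since `2t - 1 ∈ [0, 1]` and `X ≥ I`,
the Löwner–Heinz inequality bounds this below by `Zᵢ^{2t}` (`conj_mpow_le`), and
`Zᵢ^{2t} ≥ I + 2t log Zᵢ` as `exp x ≥ 1 + x` (`one_add_log_le_geomt`). The weighted sum of the
logarithms vanishes, so `F(W) ≥ I ≥ X⁻¹ = W`.

The second point is a comparison principle. By `V ♯_t A = A ♯_{1-t} V` (`geomt_symm`), `F` is
monotone and `F(cV) = c^{1-t} F(V)`. Hence `cW ≤ Y` implies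
`c^{1-t} W ≤ c^{1-t} F(W) = F(cW) ≤ F(Y) = Y`. Applied to the largest `c` with `cW ≤ Y`, this
excludes `c < 1`, as `t > 0` (`le_of_self_improving`).
-/

open Matrix
open scoped ComplexOrder

/-- Functional calculus for Hermitian matrices: apply `f` to the eigenvalues. -/
noncomputable def herm {n : ℕ} (f : ℝ → ℝ) (A : Matrix (Fin n) (Fin n) ℂ) :
    Matrix (Fin n) (Fin n) ℂ :=
  if hA : A.IsHermitian then
    (hA.eigenvectorUnitary : Matrix (Fin n) (Fin n) ℂ) *
      Matrix.diagonal (fun i => (f (hA.eigenvalues i) : ℂ)) *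
      (star (hA.eigenvectorUnitary : Matrix (Fin n) (Fin n) ℂ))
  else 0

/-- Square root of a positive definite matrix. -/
noncomputable def msqrt {n : ℕ} (A : Matrix (Fin n) (Fin n) ℂ) : Matrix (Fin n) (Fin n) ℂ :=
  herm Real.sqrt A

/-- Logarithm of a positive definite matrix. -/
noncomputable def mlog {n : ℕ} (A : Matrix (Fin n) (Fin n) ℂ) : Matrix (Fin n) (Fin n) ℂ :=
  herm Real.log A

/-- Real power of a positive definite matrix. -/
noncomputable def mpow {n : ℕ} (A : Matrix (Fin n) (Fin n) ℂ) (t : ℝ) :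
    Matrix (Fin n) (Fin n) ℂ :=
  herm (fun x => x ^ t) A

/-- Metric geometric mean `A ♯ B = A^{1/2} (A^{-1/2} B A^{-1/2})^{1/2} A^{1/2}`. -/
noncomputable def geom {n : ℕ} (A B : Matrix (Fin n) (Fin n) ℂ) : Matrix (Fin n) (Fin n) ℂ :=
  msqrt A * msqrt ((msqrt A)⁻¹ * B * (msqrt A)⁻¹) * msqrt A

/-- The solution set `Γ(ω; A₁,…,A_m)` of the spectral-geometric-mean equation
`∑ᵢ wᵢ log(Aᵢ ♯ X⁻¹) = 0` among positive definite matrices. -/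
noncomputable def Gamma {m n : ℕ} (w : Fin m → ℝ) (A : Fin m → Matrix (Fin n) (Fin n) ℂ) :
    Set (Matrix (Fin n) (Fin n) ℂ) :=
  {X | X.PosDef ∧ ∑ i, w i • mlog (geom (A i) X⁻¹) = 0}

/-- Weighted geometric mean `A ♯_t B = A^{1/2} (A^{-1/2} B A^{-1/2})^t A^{1/2}`. -/
noncomputable def geomt {n : ℕ} (t : ℝ) (A B : Matrix (Fin n) (Fin n) ℂ) :
    Matrix (Fin n) (Fin n) ℂ :=
  msqrt A * mpow ((msqrt A)⁻¹ * B * (msqrt A)⁻¹) t * msqrt A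

section Helpers

open scoped MatrixOrder

variable {n : ℕ}

/-! ### The functional calculus `herm` -/

lemma herm_of_isHermitian {A : Matrix (Fin n) (Fin n) ℂ} (hA : A.IsHermitian) (f : ℝ → ℝ) :
    herm f A = (hA.eigenvectorUnitary : Matrix (Fin n) (Fin n) ℂ) *
      Matrix.diagonal (fun i => (f (hA.eigenvalues i) : ℂ)) *
      (star (hA.eigenvectorUnitary : Matrix (Fin n) (Fin n) ℂ)) := by
  simp [herm, hA]

lemma herm_eq_cfc {A : Matrix (Fin n) (Fin n) ℂ} (hA : A.IsHermitian) (f : ℝ → ℝ) :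
    herm f A = cfc f A := by
  rw [hA.cfc_eq, herm_of_isHermitian hA, Matrix.IsHermitian.cfc, Unitary.conjStarAlgAut_apply]
  rfl

lemma herm_id {A : Matrix (Fin n) (Fin n) ℂ} (hA : A.IsHermitian) :
    herm (fun x => x) A = A := by
  rw [herm_of_isHermitian hA]
  conv_rhs => rw [hA.spectral_theorem, Unitary.conjStarAlgAut_apply]
  rfl

lemma herm_congr {A : Matrix (Fin n) (Fin n) ℂ} (hA : A.PosDef) {f g : ℝ → ℝ}
    (h : ∀ x, 0 < x → f x = g x) : herm f A = herm g A := by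
  simp only [herm_of_isHermitian hA.1, h _ (hA.eigenvalues_pos _)]

lemma herm_mul {A : Matrix (Fin n) (Fin n) ℂ} (hA : A.IsHermitian) (f g : ℝ → ℝ) :
    herm f A * herm g A = herm (fun x => f x * g x) A := by
  simp only [herm_of_isHermitian hA]
  have hU : star (hA.eigenvectorUnitary : Matrix (Fin n) (Fin n) ℂ) *
    (hA.eigenvectorUnitary : Matrix (Fin n) (Fin n) ℂ) = 1 := Unitary.coe_star_mul_self _
  generalize (hA.eigenvectorUnitary : Matrix (Fin n) (Fin n) ℂ) = U at *
  have : (Matrix.diagonal fun i => ((f (hA.eigenvalues i) * g (hA.eigenvalues i) : ℝ) : ℂ)) =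
      Matrix.diagonal (fun i => (f (hA.eigenvalues i) : ℂ)) *
        Matrix.diagonal (fun i => (g (hA.eigenvalues i) : ℂ)) := by
    rw [Matrix.diagonal_mul_diagonal]; simp
  rw [this]
  simp only [Matrix.mul_assoc]
  rw [← Matrix.mul_assoc (star U) U, hU, Matrix.one_mul]

lemma herm_one_add_smul {A : Matrix (Fin n) (Fin n) ℂ} (hA : A.IsHermitian) (f : ℝ → ℝ)
    (p : ℝ) : herm (fun x => 1 + p * f x) A = 1 + p • herm f A := by
  simp only [herm_of_isHermitian hA]
  have hU : (hA.eigenvectorUnitary : Matrix (Fin n) (Fin n) ℂ) *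
    star (hA.eigenvectorUnitary : Matrix (Fin n) (Fin n) ℂ) = 1 := Unitary.coe_mul_star_self _
  generalize (hA.eigenvectorUnitary : Matrix (Fin n) (Fin n) ℂ) = U at *
  have : (Matrix.diagonal fun i => ((1 + p * f (hA.eigenvalues i) : ℝ) : ℂ)) =
      1 + p • Matrix.diagonal (fun i => (f (hA.eigenvalues i) : ℂ)) := by
    ext i j
    by_cases h : i = j
    · subst h; simp
    · simp [h]
  rw [this, Matrix.mul_add, Matrix.add_mul, Matrix.mul_one, hU]
  simp

lemma herm_le_herm {A : Matrix (Fin n) (Fin n) ℂ} (hA : A.PosDef) {f g : ℝ → ℝ}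
    (h : ∀ x, 0 < x → f x ≤ g x) : herm f A ≤ herm g A := by
  rw [Matrix.le_iff, herm_of_isHermitian hA.1, herm_of_isHermitian hA.1, ← Matrix.sub_mul,
    ← Matrix.mul_sub, Matrix.diagonal_sub]
  refine Matrix.PosSemidef.mul_mul_conjTranspose_same ?_ _
  refine Matrix.PosSemidef.diagonal fun i => ?_
  simpa using h _ (hA.eigenvalues_pos i)

lemma herm_posDef {A : Matrix (Fin n) (Fin n) ℂ} (hA : A.PosDef) {f : ℝ → ℝ}
    (h : ∀ x, 0 < x → 0 < f x) : (herm f A).PosDef := by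
  rw [herm_of_isHermitian hA.1]
  refine (Matrix.IsUnit.posDef_star_right_conjugate_iff ?_).2 ?_
  · exact (Unitary.toUnits hA.1.eigenvectorUnitary).isUnit
  · refine Matrix.PosDef.diagonal fun i => ?_
    simpa using h _ (hA.eigenvalues_pos i)

/-- The functional calculus respects intertwining with a real diagonal matrix. Every naturality
property used below (composition, scaling, `C f(C*C) = f(CC*) C`) is an instance of this. -/
lemma herm_intertwine_diagonal {N S : Matrix (Fin n) (Fin n) ℂ} (hN : N.IsHermitian)
    (d : Fin n → ℝ) (h : S * Matrix.diagonal (fun i => (d i : ℂ)) = N * S) (f : ℝ → ℝ) :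
    S * Matrix.diagonal (fun i => (f (d i) : ℂ)) = herm f N * S := by
  have hVs : star (hN.eigenvectorUnitary : Matrix (Fin n) (Fin n) ℂ) *
    (hN.eigenvectorUnitary : Matrix (Fin n) (Fin n) ℂ) = 1 := Unitary.coe_star_mul_self _
  have hV : (hN.eigenvectorUnitary : Matrix (Fin n) (Fin n) ℂ) *
    star (hN.eigenvectorUnitary : Matrix (Fin n) (Fin n) ℂ) = 1 := Unitary.coe_mul_star_self _
  have hNe := (herm_id hN).symm
  rw [herm_of_isHermitian hN] at hNe ⊢
  generalize (hN.eigenvectorUnitary : Matrix (Fin n) (Fin n) ℂ) = V at *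
  generalize hN.eigenvalues = e at *
  have hST : S = V * (star V * S) := by rw [← Matrix.mul_assoc, hV, Matrix.one_mul]
  have h1 : (star V * S) * Matrix.diagonal (fun i => (d i : ℂ)) =
      Matrix.diagonal (fun i => (e i : ℂ)) * (star V * S) := by
    rw [Matrix.mul_assoc, h, hNe]
    simp only [Matrix.mul_assoc]
    rw [← Matrix.mul_assoc (star V) V, hVs, Matrix.one_mul]
  have h2 : (star V * S) * Matrix.diagonal (fun i => (f (d i) : ℂ)) =
      Matrix.diagonal (fun i => (f (e i) : ℂ)) * (star V * S) := by
    -- An entry of `V* S` is either zero or joins equal eigenvalues.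
    ext i j
    have h3 := congrFun (congrFun h1 i) j
    rw [Matrix.mul_diagonal, Matrix.diagonal_mul] at h3 ⊢
    by_cases hz : (star V * S) i j = 0
    · simp [hz]
    · rw [mul_comm] at h3
      have := mul_right_cancel₀ hz h3
      rw [Complex.ofReal_inj.1 this, mul_comm]
  calc S * Matrix.diagonal (fun i => (f (d i) : ℂ))
      = V * ((star V * S) * Matrix.diagonal (fun i => (f (d i) : ℂ))) := by
        rw [← Matrix.mul_assoc, ← hST]
    _ = _ := by rw [h2]; simp only [Matrix.mul_assoc]

lemma herm_intertwine {M N S : Matrix (Fin n) (Fin n) ℂ} (hM : M.IsHermitian)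
    (hN : N.IsHermitian) (h : S * M = N * S) (f : ℝ → ℝ) :
    S * herm f M = herm f N * S := by
  have hU : star (hM.eigenvectorUnitary : Matrix (Fin n) (Fin n) ℂ) *
    (hM.eigenvectorUnitary : Matrix (Fin n) (Fin n) ℂ) = 1 := Unitary.coe_star_mul_self _
  have hUs : (hM.eigenvectorUnitary : Matrix (Fin n) (Fin n) ℂ) *
    star (hM.eigenvectorUnitary : Matrix (Fin n) (Fin n) ℂ) = 1 := Unitary.coe_mul_star_self _
  have hMe := (herm_id hM).symm
  rw [herm_of_isHermitian hM] at hMe ⊢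
  generalize (hM.eigenvectorUnitary : Matrix (Fin n) (Fin n) ℂ) = U at *
  have key := herm_intertwine_diagonal (S := S * U) hN hM.eigenvalues (by
    rw [← Matrix.mul_assoc, ← h]
    conv_rhs => rw [hMe]
    simp only [Matrix.mul_assoc, hU, Matrix.mul_one]) f
  rw [← Matrix.mul_assoc, ← Matrix.mul_assoc, key]
  simp only [Matrix.mul_assoc, hUs, Matrix.mul_one]

lemma herm_comp {M : Matrix (Fin n) (Fin n) ℂ} (hM : M.IsHermitian) (g f : ℝ → ℝ)
    (hN : (herm g M).IsHermitian) :
    herm f (herm g M) = herm (fun x => f (g x)) M := by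
  have hU : star (hM.eigenvectorUnitary : Matrix (Fin n) (Fin n) ℂ) *
    (hM.eigenvectorUnitary : Matrix (Fin n) (Fin n) ℂ) = 1 := Unitary.coe_star_mul_self _
  have hUs : (hM.eigenvectorUnitary : Matrix (Fin n) (Fin n) ℂ) *
    star (hM.eigenvectorUnitary : Matrix (Fin n) (Fin n) ℂ) = 1 := Unitary.coe_mul_star_self _
  have e1 := herm_of_isHermitian hM g
  rw [herm_of_isHermitian hM (fun x => f (g x))]
  generalize (hM.eigenvectorUnitary : Matrix (Fin n) (Fin n) ℂ) = U at *
  have key := herm_intertwine_diagonal (S := U) hN (fun i => g (hM.eigenvalues i)) (by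
    rw [e1]; simp only [Matrix.mul_assoc, hU, Matrix.mul_one]) f
  rw [key, Matrix.mul_assoc, hUs, Matrix.mul_one]

lemma mpow_smul {M : Matrix (Fin n) (Fin n) ℂ} (hM : M.PosDef) {c : ℝ} (hc : 0 < c) (s : ℝ) :
    mpow (c • M) s = c ^ s • mpow M s := by
  have e (k : ℝ) (f : ℝ → ℝ) : herm (fun x => k * f x) M = k • herm f M := by
    simp only [herm_of_isHermitian hM.1]
    rw [← Matrix.smul_mul, ← Matrix.mul_smul]
    congr 2
    ext i j
    by_cases h : i = j
    · subst h; simp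
    · simp [h]
  have e1 : c • M = herm (fun x => c * x) M := by rw [e c (fun x => x), herm_id hM.1]
  have hh : (herm (fun x => c * x) M).PosDef := herm_posDef hM fun x hx => mul_pos hc hx
  unfold mpow
  rw [e1, herm_comp hM.1 _ _ hh.1, ← e]
  exact herm_congr hM fun x hx => Real.mul_rpow hc.le hx.le

lemma posDef_conj {M S : Matrix (Fin n) (Fin n) ℂ} (hM : M.PosDef) (hS : S.PosDef) :
    (S * M * S).PosDef := by
  have := (Matrix.IsUnit.posDef_star_right_conjugate_iff (x := M) hS.isUnit).2 hM
  rwa [Matrix.star_eq_conjTranspose, hS.1.eq] at this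

lemma conj_le {M N : Matrix (Fin n) (Fin n) ℂ} (h : M ≤ N) (B : Matrix (Fin n) (Fin n) ℂ) :
    B * M * Bᴴ ≤ B * N * Bᴴ := by
  rw [Matrix.le_iff] at *
  have := h.mul_mul_conjTranspose_same B
  rwa [Matrix.mul_sub, Matrix.sub_mul] at this

lemma conj_le_of_posDef {M N S : Matrix (Fin n) (Fin n) ℂ} (h : M ≤ N) (hS : S.PosDef) :
    S * M * S ≤ S * N * S := by
  have := conj_le h S
  rwa [hS.1.eq] at this

lemma smul_le {M N : Matrix (Fin n) (Fin n) ℂ} (h : M ≤ N) {c : ℝ} (hc : 0 ≤ c) :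
    c • M ≤ c • N := by
  rw [Matrix.le_iff] at *
  rw [← smul_sub]
  exact h.smul hc

lemma msqrt_posDef {A : Matrix (Fin n) (Fin n) ℂ} (hA : A.PosDef) : (msqrt A).PosDef :=
  herm_posDef hA fun _ hx => Real.sqrt_pos.2 hx

lemma msqrt_mul_msqrt {A : Matrix (Fin n) (Fin n) ℂ} (hA : A.PosDef) :
    msqrt A * msqrt A = A := by
  unfold msqrt
  rw [herm_mul hA.1, herm_congr hA (g := fun x => x) (fun x hx => Real.mul_self_sqrt hx.le),
    herm_id hA.1]

lemma mpow_posDef {A : Matrix (Fin n) (Fin n) ℂ} (hA : A.PosDef) (s : ℝ) : (mpow A s).PosDef :=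
  herm_posDef hA fun _ hx => Real.rpow_pos_of_pos hx s

lemma mpow_mul {A : Matrix (Fin n) (Fin n) ℂ} (hA : A.PosDef) (r s : ℝ) :
    mpow A r * mpow A s = mpow A (r + s) := by
  unfold mpow
  rw [herm_mul hA.1]
  exact herm_congr hA fun x hx => (Real.rpow_add hx r s).symm

lemma mpow_one {A : Matrix (Fin n) (Fin n) ℂ} (hA : A.PosDef) : mpow A 1 = A := by
  unfold mpow
  simp only [Real.rpow_one]
  exact herm_id hA.1

lemma mpow_mpow {A : Matrix (Fin n) (Fin n) ℂ} (hA : A.PosDef) (r s : ℝ) :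
    mpow (mpow A r) s = mpow A (r * s) := by
  have h := (mpow_posDef hA r).1
  unfold mpow at *
  rw [herm_comp hA.1 _ _ h]
  exact herm_congr hA fun x hx => (Real.rpow_mul hx.le r s).symm

lemma mpow_neg_one {A : Matrix (Fin n) (Fin n) ℂ} (hA : A.PosDef) : mpow A (-1) = A⁻¹ := by
  refine (Matrix.inv_eq_left_inv ?_).symm
  nth_rw 2 [← mpow_one hA]
  rw [mpow_mul hA]
  have := herm_one_add_smul hA.1 (fun _ => 0) 0
  simpa [mpow] using this

/-- The Löwner–Heinz inequality. -/
lemma mpow_le_mpow {A B : Matrix (Fin n) (Fin n) ℂ} (hA : A.PosDef) (hB : B.PosDef)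
    (h : A ≤ B) {s : ℝ} (hs : s ∈ Set.Icc (0 : ℝ) 1) : mpow A s ≤ mpow B s := by
  open scoped Matrix.Norms.L2Operator in
  have := CFC.rpow_le_rpow (A := Matrix (Fin n) (Fin n) ℂ) hs h
  rw [CFC.rpow_eq_cfc_real hA.posSemidef.nonneg, CFC.rpow_eq_cfc_real hB.posSemidef.nonneg] at this
  unfold mpow
  rwa [herm_eq_cfc hA.1, herm_eq_cfc hB.1]

/-! ### Geometric means -/

lemma inv_mul_self_of_posDef {S : Matrix (Fin n) (Fin n) ℂ} (hS : S.PosDef) : S⁻¹ * S = 1 :=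
  Matrix.nonsing_inv_mul _ ((Matrix.isUnit_iff_isUnit_det _).1 hS.isUnit)

lemma mul_inv_self_of_posDef {S : Matrix (Fin n) (Fin n) ℂ} (hS : S.PosDef) : S * S⁻¹ = 1 :=
  Matrix.mul_nonsing_inv _ ((Matrix.isUnit_iff_isUnit_det _).1 hS.isUnit)

/-- Symmetry of the weighted geometric mean, `Y ♯_t A = A ♯_{1-t} Y`. -/
lemma geomt_symm {A Y : Matrix (Fin n) (Fin n) ℂ} (hA : A.PosDef) (hY : Y.PosDef) (t : ℝ) :
    geomt t Y A = geomt (1 - t) A Y := by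
  unfold geomt
  have hR := msqrt_posDef hY
  have hRR := msqrt_mul_msqrt hY
  have hS := msqrt_posDef hA
  have hSS := msqrt_mul_msqrt hA
  have hM := posDef_conj hA hR.inv
  have hK := posDef_conj hY hS.inv
  generalize msqrt Y = R at *
  generalize msqrt A = S at *
  subst hRR hSS
  have r1 := inv_mul_self_of_posDef hR
  have r2 := mul_inv_self_of_posDef hR
  have s1 := inv_mul_self_of_posDef hS
  have s2 := mul_inv_self_of_posDef hS
  have r1_cancel (Z) : R⁻¹ * (R * Z) = Z := by rw [← Matrix.mul_assoc, r1, Matrix.one_mul]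
  have r2_cancel (Z) : R * (R⁻¹ * Z) = Z := by rw [← Matrix.mul_assoc, r2, Matrix.one_mul]
  have s1_cancel (Z) : S⁻¹ * (S * Z) = Z := by rw [← Matrix.mul_assoc, s1, Matrix.one_mul]
  have s2_cancel (Z) : S * (S⁻¹ * Z) = Z := by rw [← Matrix.mul_assoc, s2, Matrix.one_mul]
  set M := R⁻¹ * (S * S) * R⁻¹ with hMdef
  set K := S⁻¹ * (R * R) * S⁻¹ with hKdef
  have hKi : K⁻¹ = S * (R⁻¹ * (R⁻¹ * S)) := by
    refine Matrix.inv_eq_left_inv ?_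
    simp only [hKdef, Matrix.mul_assoc, s2_cancel, r1_cancel, s2]
  have hint : (S⁻¹ * R) * mpow M t = mpow K⁻¹ t * (S⁻¹ * R) := by
    refine herm_intertwine hM.1 hK.inv.1 ?_ _
    simp only [hKi, hMdef, Matrix.mul_assoc, s1_cancel, s2_cancel, r2_cancel, r1, Matrix.mul_one]
  have e : R * mpow M t * R = S * (mpow K⁻¹ t * (S⁻¹ * R)) * R := by
    rw [← hint]
    simp only [Matrix.mul_assoc, s2_cancel]
  have e2 : S⁻¹ * (R * R) = K * S := by
    simp only [hKdef, Matrix.mul_assoc, s1, Matrix.mul_one]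
  rw [e, ← mpow_neg_one hK, mpow_mpow hK, Matrix.mul_assoc, Matrix.mul_assoc, Matrix.mul_assoc,
    e2]
  conv_lhs => rw [show K * S = mpow K 1 * S by rw [mpow_one hK]]
  rw [← Matrix.mul_assoc (mpow K _), mpow_mul hK, ← Matrix.mul_assoc]
  congr 3
  ring

lemma geomt_mono {A Y W : Matrix (Fin n) (Fin n) ℂ} (hA : A.PosDef) (hY : Y.PosDef)
    (hW : W.PosDef) (h : W ≤ Y) {t : ℝ} (ht : t ∈ Set.Icc (0 : ℝ) 1) :
    geomt t W A ≤ geomt t Y A := by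
  rw [geomt_symm hA hY, geomt_symm hA hW]
  have hS := msqrt_posDef hA
  exact conj_le_of_posDef (mpow_le_mpow (posDef_conj hW hS.inv) (posDef_conj hY hS.inv)
    (conj_le_of_posDef h hS.inv) ⟨by linarith [ht.2], by linarith [ht.1]⟩) hS

lemma geomt_smul {A W : Matrix (Fin n) (Fin n) ℂ} (hA : A.PosDef) (hW : W.PosDef) {c : ℝ}
    (hc : 0 < c) (t : ℝ) : geomt t (c • W) A = c ^ (1 - t) • geomt t W A := by
  rw [geomt_symm hA (hW.smul hc), geomt_symm hA hW]
  unfold geomt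
  rw [Matrix.mul_smul, Matrix.smul_mul,
    mpow_smul (posDef_conj hW (msqrt_posDef hA).inv) hc, Matrix.mul_smul, Matrix.smul_mul]

lemma geom_posDef {A B : Matrix (Fin n) (Fin n) ℂ} (hA : A.PosDef) (hB : B.PosDef) :
    (geom A B).PosDef :=
  posDef_conj (msqrt_posDef (posDef_conj hB (msqrt_posDef hA).inv)) (msqrt_posDef hA)

/-- The Riccati equation: `Z = A ♯ X⁻¹` satisfies `Z X Z = A`. -/
lemma geom_riccati {A X : Matrix (Fin n) (Fin n) ℂ} (hA : A.PosDef) (hX : X.PosDef) :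
    geom A X⁻¹ * X * geom A X⁻¹ = A := by
  have hZ := geom_posDef hA hX.inv
  have hS := msqrt_posDef hA
  have hSS := msqrt_mul_msqrt hA
  have hHH := msqrt_mul_msqrt (posDef_conj hX.inv hS.inv)
  have s1 := inv_mul_self_of_posDef hS
  have s2 := mul_inv_self_of_posDef hS
  have z1 := inv_mul_self_of_posDef hZ
  have z2 := mul_inv_self_of_posDef hZ
  have key : geom A X⁻¹ * A⁻¹ * geom A X⁻¹ = X⁻¹ := by
    unfold geom
    have hAi : A⁻¹ = (msqrt A)⁻¹ * (msqrt A)⁻¹ := by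
      conv_lhs => rw [← hSS]
      rw [Matrix.mul_inv_rev]
    rw [hAi]
    generalize msqrt ((msqrt A)⁻¹ * X⁻¹ * (msqrt A)⁻¹) = H at *
    generalize msqrt A = S at *
    have s1_cancel (Z) : S⁻¹ * (S * Z) = Z := by rw [← Matrix.mul_assoc, s1, Matrix.one_mul]
    have s2_cancel (Z) : S * (S⁻¹ * Z) = Z := by rw [← Matrix.mul_assoc, s2, Matrix.one_mul]
    simp only [Matrix.mul_assoc, s1_cancel, s2_cancel]
    rw [← Matrix.mul_assoc H H, hHH]
    simp only [Matrix.mul_assoc, s1, s2_cancel, Matrix.mul_one]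
  generalize geom A X⁻¹ = Z at *
  have hinv : X = Z⁻¹ * A * Z⁻¹ := by
    have := congrArg (fun M => M⁻¹) key
    simp only [Matrix.mul_inv_rev] at this
    rw [Matrix.nonsing_inv_nonsing_inv _ ((Matrix.isUnit_iff_isUnit_det _).1 hA.isUnit),
      Matrix.nonsing_inv_nonsing_inv _ ((Matrix.isUnit_iff_isUnit_det _).1 hX.isUnit)] at this
    rw [← this, Matrix.mul_assoc]
  rw [hinv]
  have z2_cancel (B) : Z * (Z⁻¹ * B) = B := by rw [← Matrix.mul_assoc, z2, Matrix.one_mul]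
  simp only [Matrix.mul_assoc, z2_cancel, z1, Matrix.mul_one]

/-! ### The main estimate -/

/-- For `S = X^{1/2}` with `X ≥ I` and `p ∈ [1, 2]`, `(S Z S)^p ≥ S Z^p S`. With
`B = S Z^{1/2}` one has `(B B*)^p = B (B* B)^{p-1} B*`, and `B* B = Z^{1/2} X Z^{1/2} ≥ Z`, so
Löwner–Heinz applies with exponent `p - 1`. -/
lemma conj_mpow_le {S Z : Matrix (Fin n) (Fin n) ℂ} (hS : S.PosDef) (hZ : Z.PosDef)
    (h1 : 1 ≤ S * S) {p : ℝ} (hp : p ∈ Set.Icc (1 : ℝ) 2) :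
    S * mpow Z p * S ≤ mpow (S * Z * S) p := by
  have hQ := posDef_conj hZ hS
  have hT := msqrt_posDef hZ
  have hTT := msqrt_mul_msqrt hZ
  have hTcomm : msqrt Z * mpow Z (p - 1) = mpow Z (p - 1) * msqrt Z := by
    unfold msqrt mpow
    rw [herm_mul hZ.1, herm_mul hZ.1]
    simp only [mul_comm]
  set T := msqrt Z
  have hK : (T * (S * S) * T).PosDef := by
    refine posDef_conj ?_ hT
    simpa using posDef_conj Matrix.PosDef.one hS
  have hZK : Z ≤ T * (S * S) * T := by
    have := conj_le_of_posDef h1 hT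
    rwa [Matrix.mul_one, hTT] at this
  have hpow := mpow_le_mpow hZ hK hZK (s := p - 1) ⟨by linarith [hp.1], by linarith [hp.2]⟩
  have hB := conj_le hpow (S * T)
  have hBH : (S * T)ᴴ = T * S := by rw [Matrix.conjTranspose_mul, hT.1.eq, hS.1.eq]
  rw [hBH] at hB
  have hint : (S * T) * mpow (T * (S * S) * T) (p - 1) = mpow (S * Z * S) (p - 1) * (S * T) := by
    refine herm_intertwine hK.1 hQ.1 ?_ _
    rw [← hTT]
    simp only [Matrix.mul_assoc]
  have eL : S * T * mpow Z (p - 1) * (T * S) = S * mpow Z p * S := by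
    rw [Matrix.mul_assoc S T, hTcomm]
    calc S * (mpow Z (p - 1) * T) * (T * S) = S * (mpow Z (p - 1) * (T * T)) * S := by
          simp only [Matrix.mul_assoc]
      _ = S * (mpow Z (p - 1) * mpow Z 1) * S := by rw [hTT, mpow_one hZ]
      _ = _ := by rw [mpow_mul hZ, sub_add_cancel]
  have eR : S * T * mpow (T * (S * S) * T) (p - 1) * (T * S) = mpow (S * Z * S) p := by
    rw [hint]
    calc mpow (S * Z * S) (p - 1) * (S * T) * (T * S)
        = mpow (S * Z * S) (p - 1) * (S * (T * T) * S) := by simp only [Matrix.mul_assoc]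
      _ = mpow (S * Z * S) (p - 1) * mpow (S * Z * S) 1 := by rw [hTT, mpow_one hQ]
      _ = _ := by rw [mpow_mul hQ, sub_add_cancel]
  rwa [eL, eR] at hB

lemma one_add_log_le_mpow {Z : Matrix (Fin n) (Fin n) ℂ} (hZ : Z.PosDef) (p : ℝ) :
    1 + p • mlog Z ≤ mpow Z p := by
  unfold mlog mpow
  rw [← herm_one_add_smul hZ.1]
  refine herm_le_herm hZ fun x hx => ?_
  rw [Real.rpow_def_of_pos hx]
  linarith [Real.add_one_le_exp (Real.log x * p)]

/-- With `Z = A ♯ X⁻¹` and `R = X^{-1/2}`, the Riccati equation gives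
`X⁻¹ ♯_t A = R (R⁻¹ Z R⁻¹)^{2t} R`, which is bounded below by `Z^{2t} ≥ 1 + 2t log Z`. -/
lemma one_add_log_le_geomt {A X : Matrix (Fin n) (Fin n) ℂ} (hA : A.PosDef) (hX : X.PosDef)
    (h1 : 1 ≤ X) {t : ℝ} (ht : t ∈ Set.Icc (1 / 2 : ℝ) 1) :
    1 + (2 * t) • mlog (geom A X⁻¹) ≤ geomt t X⁻¹ A := by
  have hZ := geom_posDef hA hX.inv
  have hric := geom_riccati hA hX
  refine (one_add_log_le_mpow hZ (2 * t)).trans ?_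
  generalize geom A X⁻¹ = Z at *
  unfold geomt
  have hR := msqrt_posDef hX.inv
  have hRR := msqrt_mul_msqrt hX.inv
  generalize msqrt X⁻¹ = R at *
  have hS := hR.inv
  have hSS : R⁻¹ * R⁻¹ = X := by
    rw [← Matrix.mul_inv_rev, hRR,
      Matrix.nonsing_inv_nonsing_inv _ ((Matrix.isUnit_iff_isUnit_det _).1 hX.isUnit)]
  have r1 := inv_mul_self_of_posDef hR
  have r2 := mul_inv_self_of_posDef hR
  generalize R⁻¹ = S at *
  have hQ := posDef_conj hZ hS
  have e1 : S * A * S = mpow (S * Z * S) 2 := by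
    rw [show (2 : ℝ) = 1 + 1 by norm_num, ← mpow_mul hQ, mpow_one hQ, ← hric, ← hSS]
    simp only [Matrix.mul_assoc]
  rw [e1, mpow_mpow hQ]
  have := conj_le_of_posDef (conj_mpow_le hS hZ (by rwa [hSS]) (p := 2 * t)
    ⟨by linarith [ht.1], by linarith [ht.2]⟩) hR
  have e2 : R * (S * mpow Z (2 * t) * S) * R = mpow Z (2 * t) := by
    simp only [Matrix.mul_assoc, r1, Matrix.mul_one]
    rw [← Matrix.mul_assoc, r2, Matrix.one_mul]
  rwa [e2] at this

lemma inv_le_one_of_posDef {X : Matrix (Fin n) (Fin n) ℂ} (hX : X.PosDef) (h1 : 1 ≤ X) :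
    X⁻¹ ≤ 1 := by
  have hS := msqrt_posDef hX
  have hSS := msqrt_mul_msqrt hX
  have h := conj_le_of_posDef h1 hS.inv
  have e : (msqrt X)⁻¹ * X * (msqrt X)⁻¹ = 1 := by
    nth_rw 2 [← hSS]
    rw [← Matrix.mul_assoc, inv_mul_self_of_posDef hS, Matrix.one_mul, mul_inv_self_of_posDef hS]
  rwa [e, Matrix.mul_one, ← Matrix.mul_inv_rev, hSS] at h

lemma smul_one_le_iff {G : Matrix (Fin n) (Fin n) ℂ} (hG : G.PosDef) (c : ℝ) :
    c • (1 : Matrix (Fin n) (Fin n) ℂ) ≤ G ↔ ∀ i, c ≤ hG.1.eigenvalues i := by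
  have hU : (hG.1.eigenvectorUnitary : Matrix (Fin n) (Fin n) ℂ) *
    star (hG.1.eigenvectorUnitary : Matrix (Fin n) (Fin n) ℂ) = 1 := Unitary.coe_mul_star_self _
  have hu : IsUnit (hG.1.eigenvectorUnitary : Matrix (Fin n) (Fin n) ℂ) :=
    (Unitary.toUnits hG.1.eigenvectorUnitary).isUnit
  have e := herm_of_isHermitian hG.1 (fun x => x)
  rw [herm_id hG.1] at e
  have e2 : G - c • (1 : Matrix (Fin n) (Fin n) ℂ) =
      (hG.1.eigenvectorUnitary : Matrix (Fin n) (Fin n) ℂ) *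
      Matrix.diagonal (fun i => ((hG.1.eigenvalues i : ℂ) - (c : ℂ))) *
      star (hG.1.eigenvectorUnitary : Matrix (Fin n) (Fin n) ℂ) := by
    have : Matrix.diagonal (fun i => ((hG.1.eigenvalues i : ℂ) - (c : ℂ))) =
        Matrix.diagonal (fun i => (hG.1.eigenvalues i : ℂ)) -
          c • (1 : Matrix (Fin n) (Fin n) ℂ) := by
      ext i j
      by_cases h : i = j
      · subst h; simp
      · simp [h]
    rw [this, Matrix.mul_sub, Matrix.sub_mul, ← e]
    simp [hU]
  rw [Matrix.le_iff, e2, Matrix.IsUnit.posSemidef_star_right_conjugate_iff hu,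
    Matrix.posSemidef_diagonal_iff]
  refine forall_congr' fun i => ?_
  rw [← Complex.ofReal_sub, Complex.zero_le_real, sub_nonneg]

/-- If every inequality `c W ≤ Y` with `0 < c < 1` self-improves to `c^s W ≤ Y` for a fixed
`s < 1`, then `W ≤ Y`: take for `c` the least eigenvalue of `W^{-1/2} Y W^{-1/2}`. -/
lemma le_of_self_improving {W Y : Matrix (Fin n) (Fin n) ℂ} (hW : W.PosDef) (hY : Y.PosDef)
    {s : ℝ} (hs : s < 1)
    (h : ∀ c : ℝ, 0 < c → c < 1 → c • W ≤ Y → c ^ s • W ≤ Y) : W ≤ Y := by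
  have hR := msqrt_posDef hW
  have hRR := msqrt_mul_msqrt hW
  generalize msqrt W = R at *
  have r1 := inv_mul_self_of_posDef hR
  have r2 := mul_inv_self_of_posDef hR
  have hG := posDef_conj hY hR.inv
  have key (c : ℝ) : c • W ≤ Y ↔ ∀ i, c ≤ hG.1.eigenvalues i := by
    rw [← smul_one_le_iff hG]
    constructor
    · intro hc
      have := conj_le_of_posDef hc hR.inv
      rw [← hRR, Matrix.mul_smul, Matrix.smul_mul, ← Matrix.mul_assoc, r1, Matrix.one_mul, r2]
        at this
      exact this
    · intro hc
      have := conj_le_of_posDef hc hR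
      rw [Matrix.mul_smul, Matrix.smul_mul, Matrix.mul_one, hRR] at this
      refine this.trans_eq ?_
      simp only [Matrix.mul_assoc, r1, Matrix.mul_one]
      rw [← Matrix.mul_assoc, r2, Matrix.one_mul]
  rw [← one_smul ℝ W, key]
  by_contra! hlt
  obtain ⟨j, hj⟩ := hlt
  have : Nonempty (Fin n) := ⟨j⟩
  obtain ⟨i, hi⟩ := Finite.exists_min hG.1.eigenvalues
  have hc0 : 0 < hG.1.eigenvalues i := hG.eigenvalues_pos i
  have hc1 : hG.1.eigenvalues i < 1 := (hi j).trans_lt hj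
  have h3 := (key _).1 (h _ hc0 hc1 ((key _).2 hi)) i
  have h4 := Real.rpow_lt_rpow_of_exponent_gt hc0 hc1 hs
  rw [Real.rpow_one] at h4
  linarith

end Helpers

theorem stmt15 {m n : ℕ} (w : Fin m → ℝ) (hw : ∀ i, 0 < w i) (hw1 : ∑ i, w i = 1)
    (A : Fin m → Matrix (Fin n) (Fin n) ℂ) (hA : ∀ i, (A i).PosDef)
    (t : ℝ) (ht : t ∈ Set.Icc (1 / 2 : ℝ) 1)
    (X Y : Matrix (Fin n) (Fin n) ℂ) (hX : X ∈ Gamma w A)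
    (hXge : (X - (1 : Matrix (Fin n) (Fin n) ℂ)).PosSemidef)
    (hY : Y.PosDef) (hYeq : Y = ∑ i, w i • geomt t Y (A i)) :
    (Y - X⁻¹).PosSemidef := by
  obtain ⟨hXpd, hXeq⟩ := hX
  have h1 : Matrix.instPreOrder.le 1 X := hXge
  open scoped MatrixOrder in
  have hWle : X⁻¹ ≤ ∑ i, w i • geomt t X⁻¹ (A i) := by
    refine (inv_le_one_of_posDef hXpd h1).trans ?_
    have hs : ∑ i, w i • (1 + (2 * t) • mlog (geom (A i) X⁻¹)) = 1 := by
      simp only [smul_add, Finset.sum_add_distrib, ← Finset.sum_smul, hw1, one_smul]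
      simp only [smul_comm _ (2 * t), ← Finset.smul_sum, hXeq, smul_zero, add_zero]
    rw [← hs]
    exact Finset.sum_le_sum fun i _ =>
      smul_le (one_add_log_le_geomt (hA i) hXpd h1 ht) (hw i).le
  refine le_of_self_improving hXpd.inv hY (s := 1 - t) (by linarith [ht.1]) ?_
  intro c hc0 _ hc
  open scoped MatrixOrder in
  calc c ^ (1 - t) • X⁻¹ ≤ c ^ (1 - t) • ∑ i, w i • geomt t X⁻¹ (A i) :=
        smul_le hWle (Real.rpow_nonneg hc0.le _)
    _ = ∑ i, w i • geomt t (c • X⁻¹) (A i) := by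
        rw [Finset.smul_sum]
        refine Finset.sum_congr rfl fun i _ => ?_
        rw [geomt_smul (hA i) hXpd.inv hc0, smul_comm]
    _ ≤ ∑ i, w i • geomt t Y (A i) :=
        Finset.sum_le_sum fun i _ => smul_le (geomt_mono (hA i) hY (hXpd.inv.smul hc0) hc
          ⟨by linarith [ht.1], ht.2⟩) (hw i).le
    _ = Y := hYeq.symm
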